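/- (Theorem 1, suboptimality estimate for the reduced-horizon feedback, absolute form.) Let M = N − N_B ≥ 2, let γ > 0 be a real number with (γ+1)^{M−2} > γ^M, suppose Assumption (γ, M) holds, and additionally assume that for all x ∈ X, writing x⁺ = f(x, μ_M(x)), V_M(x⁺) ≤ V_{M−1}(x⁺) + (γ^M / (γ+1)^{M−2})·ℓ(x, μ_M(x)). Then for all x ∈ X, V_∞^{μ_M}(x) ≤ ((γ+1)^{M−2} / ((γ+1)^{M−2} − γ^M))·V_∞(x), where μ_M is the optimal M-horizon feedback from Assumption (γ, M). -/

import Mathlib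

open scoped ENNReal

/-- Open-loop trajectory: `traj f x u k` is the state after `k` steps of the
dynamics `f` starting from `x` under the input sequence `u`. -/
noncomputable def traj {X U : Type*} (f : X → U → X) (x : X) (u : ℕ → U) : ℕ → X
  | 0 => x
  | k + 1 => f (traj f x u k) (u k)

/-- Extension of a finite input sequence `u : Fin N → U` to `ℕ → U`
(arbitrary values after time `N`). -/
noncomputable def extSeq {U : Type*} [Nonempty U] {N : ℕ} (u : Fin N → U) : ℕ → U :=
  fun k => if h : k < N then u ⟨k, h⟩ else Classical.arbitrary U

/-- Finite-horizon value function
`V f ℓ N x = ⨅_{u : Fin N → U} ∑_{k=0}^{N-1} ℓ(x_u(k), u(k))`, with `V 0 ≡ 0`. -/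
noncomputable def V {X U : Type*} [Nonempty U] (f : X → U → X) (ℓ : X → U → ℝ≥0∞)
    (N : ℕ) (x : X) : ℝ≥0∞ :=
  ⨅ u : Fin N → U, ∑ k ∈ Finset.range N, ℓ (traj f x (extSeq u) k) (extSeq u k)

/-- Infinite-horizon value function
`Vinf f ℓ x = ⨅_{u : ℕ → U} ∑_{k=0}^{∞} ℓ(x_u(k), u(k))`. -/
noncomputable def Vinf {X U : Type*} (f : X → U → X) (ℓ : X → U → ℝ≥0∞) (x : X) : ℝ≥0∞ :=
  ⨅ u : ℕ → U, ∑' k : ℕ, ℓ (traj f x u k) (u k)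

/-- Closed-loop trajectory under the feedback law `μ`. -/
noncomputable def clTraj {X U : Type*} (f : X → U → X) (μ : X → U) (x : X) : ℕ → X
  | 0 => x
  | k + 1 => f (clTraj f μ x k) (μ (clTraj f μ x k))

/-- Infinite-horizon closed-loop cost of the feedback law `μ`:
`Vcl f ℓ μ x = ∑_{k=0}^{∞} ℓ(x_k, μ(x_k))`. -/
noncomputable def Vcl {X U : Type*} (f : X → U → X) (ℓ : X → U → ℝ≥0∞) (μ : X → U)
    (x : X) : ℝ≥0∞ :=
  ∑' k : ℕ, ℓ (clTraj f μ x k) (μ (clTraj f μ x k))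

/-- The state at time `k` depends only on the inputs applied before time `k`. -/
theorem traj_congr {X U : Type*} (f : X → U → X) (x : X) {u v : ℕ → U} {k : ℕ}
    (h : ∀ j < k, u j = v j) : traj f x u k = traj f x v k := by
  induction k with
  | zero => rfl
  | succ k ih =>
    simp only [traj]
    rw [ih fun j hj => h j (by omega), h k (by omega)]

theorem V_le_Vinf {X U : Type*} [Nonempty U] (f : X → U → X) (ℓ : X → U → ℝ≥0∞)
    (n : ℕ) (x : X) : V f ℓ n x ≤ Vinf f ℓ x := by
  refine le_iInf fun u => ?_
  have hu : ∀ k < n, extSeq (fun i : Fin n => u i) k = u k := fun k hk => by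
    simp [extSeq, hk]
  calc V f ℓ n x
      ≤ ∑ k ∈ Finset.range n, ℓ (traj f x (extSeq fun i : Fin n => u i) k)
          (extSeq (fun i : Fin n => u i) k) := iInf_le _ _
    _ = ∑ k ∈ Finset.range n, ℓ (traj f x u k) (u k) := by
        refine Finset.sum_congr rfl fun k hk => ?_
        rw [Finset.mem_range] at hk
        rw [hu k hk, traj_congr f x fun j hj => hu j (hj.trans hk)]
    _ ≤ ∑' k : ℕ, ℓ (traj f x u k) (u k) := ENNReal.sum_le_tsum _

/-- Relaxed dynamic programming: a function `W` that decreases along the closed loop by at least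
`a` times the running cost bounds `a` times the closed-loop cost. -/
theorem mul_Vcl_le {X U : Type*} (f : X → U → X) (ℓ : X → U → ℝ≥0∞) (μ : X → U)
    (W : X → ℝ≥0∞) (a : ℝ≥0∞) (hW : ∀ x, a * ℓ x (μ x) + W (f x (μ x)) ≤ W x) (x : X) :
    a * Vcl f ℓ μ x ≤ W x := by
  have hsum : ∀ n, ∑ k ∈ Finset.range n, a * ℓ (clTraj f μ x k) (μ (clTraj f μ x k)) +
      W (clTraj f μ x n) ≤ W x := by
    intro n
    induction n with
    | zero => simp [clTraj]
    | succ n ih =>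
      rw [Finset.sum_range_succ, add_assoc]
      exact (add_le_add_right (hW _) _).trans ih
  rw [Vcl, ← ENNReal.tsum_mul_left, ENNReal.tsum_eq_iSup_nat]
  exact iSup_le fun n => le_self_add.trans (hsum n)

/-- Theorem 1 (absolute form): with `M = N - N_B ≥ 2`, `γ > 0` such that
`(γ+1)^{M-2} > γ^M`, Assumption `(γ, M)` and the relaxed-increment condition,
the reduced-horizon feedback `μ_M` satisfies
`V_∞^{μ_M}(x) ≤ ((γ+1)^{M-2} / ((γ+1)^{M-2} - γ^M))·V_∞(x)` for all `x`. -/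
theorem reduced_horizon_suboptimality_abs {X U : Type*} [Nonempty X] [Nonempty U]
    (f : X → U → X) (ℓ : X → U → ℝ≥0∞) (N NB : ℕ) (hM : 2 ≤ N - NB)
    (γ : ℝ) (hγ : 0 < γ)
    (hstrict : γ ^ (N - NB) < (γ + 1) ^ (N - NB - 2))
    (μ : ℕ → X → U)
    (hDP : ∀ k, 2 ≤ k → k ≤ N - NB → ∀ x : X,
      V f ℓ k x = ℓ x (μ k x) + V f ℓ (k - 1) (f x (μ k x)))
    (h2 : ∀ x : X, V f ℓ 2 x ≤ ENNReal.ofReal (γ + 1) * V f ℓ 1 x)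
    (hk : ∀ k, 2 ≤ k → k ≤ N - NB → ∀ x : X,
      V f ℓ k x ≤ ENNReal.ofReal (γ + 1) * ℓ x (μ k x))
    (hinc : ∀ x : X,
      V f ℓ (N - NB) (f x (μ (N - NB) x)) ≤
        V f ℓ (N - NB - 1) (f x (μ (N - NB) x)) +
          ENNReal.ofReal (γ ^ (N - NB) / (γ + 1) ^ (N - NB - 2)) *
            ℓ x (μ (N - NB) x)) :
    ∀ x : X,
      Vcl f ℓ (μ (N - NB)) x ≤
        ENNReal.ofReal
            ((γ + 1) ^ (N - NB - 2) / ((γ + 1) ^ (N - NB - 2) - γ ^ (N - NB))) *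
          Vinf f ℓ x := by
  intro x
  generalize N - NB = M at *
  have hp : 0 < (γ + 1) ^ (M - 2) := by positivity
  have hc : 0 ≤ γ ^ M / (γ + 1) ^ (M - 2) := by positivity
  have hα : 0 < 1 - γ ^ M / (γ + 1) ^ (M - 2) := by
    rw [sub_pos, div_lt_one hp]
    exact hstrict
  have hinv : (γ + 1) ^ (M - 2) / ((γ + 1) ^ (M - 2) - γ ^ M) =
      (1 - γ ^ M / (γ + 1) ^ (M - 2))⁻¹ := by
    rw [one_sub_div hp.ne', inv_div]
  rw [hinv]
  generalize γ ^ M / (γ + 1) ^ (M - 2) = c at *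
  have hdecr : ∀ y, ENNReal.ofReal (1 - c) * ℓ y (μ M y) + V f ℓ M (f y (μ M y)) ≤
      V f ℓ M y := by
    intro y
    calc ENNReal.ofReal (1 - c) * ℓ y (μ M y) + V f ℓ M (f y (μ M y))
        ≤ ENNReal.ofReal (1 - c) * ℓ y (μ M y) +
            (V f ℓ (M - 1) (f y (μ M y)) + ENNReal.ofReal c * ℓ y (μ M y)) := by
          gcongr
          exact hinc y
      _ = (ENNReal.ofReal (1 - c) + ENNReal.ofReal c) * ℓ y (μ M y) +
            V f ℓ (M - 1) (f y (μ M y)) := by ring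
      _ = V f ℓ M y := by
          rw [← ENNReal.ofReal_add hα.le hc, sub_add_cancel, ENNReal.ofReal_one, one_mul,
            hDP M hM le_rfl y]
  rw [ENNReal.ofReal_inv_of_pos hα, mul_comm, ← div_eq_mul_inv,
    ENNReal.le_div_iff_mul_le (Or.inl (ENNReal.ofReal_pos.2 hα).ne')
      (Or.inl ENNReal.ofReal_ne_top), mul_comm]
  exact (mul_Vcl_le f ℓ (μ M) (V f ℓ M) _ hdecr x).trans (V_le_Vinf f ℓ M x)
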